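/- There is a uniform constant C such that for all scalar u, v ∈ C₀^∞(ℝ×ℝ³) and all t ≥ 0: ∫_{ℝ³} ⟨x⟩^{−2} |∂²u(t,x)| |v(t,x)| dx ≤ C⟨t⟩^{−1}( Σ_{|α|≤1} ‖Γ^α u'(t,·)‖₂ + ‖⟨t+r⟩□u(t,·)‖₂ ) · ‖⟨x⟩^{−2} v(t,·)‖₂ + C⟨t⟩^{−4/3}( Σ_{|α|≤1} ‖Γ^α u'(t,·)‖₂ + ‖⟨t+r⟩□u(t,·)‖₂ ) · ‖v'(t,·)‖₂, where |∂²u| denotes the sum of absolute values of all second space-time derivatives of u. -/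

import Mathlib

open MeasureTheory Real Finset

noncomputable section

/-- Points of space-time `ℝ×ℝ³`, written `X = (x₀,x₁,x₂,x₃)` with `x₀ = t`. -/
abbrev Pt : Type := Fin 4 → ℝ
/-- Points of space `ℝ³`. -/
abbrev Sp : Type := Fin 3 → ℝ

/-- Space-time partial derivative `∂_a`. -/
def pd (a : Fin 4) (u : Pt → ℝ) : Pt → ℝ := fun X => fderiv ℝ u X (Pi.single a 1)

/-- Rotation field `Ω_{ij} = x_i ∂_j - x_j ∂_i` (space-time indices). -/
def rot (i j : Fin 4) (u : Pt → ℝ) : Pt → ℝ := fun X => X i * pd j u X - X j * pd i u X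

/-- Scaling field `S = t ∂_t + x·∇_x = x^a ∂_a`. -/
def scal (u : Pt → ℝ) : Pt → ℝ := fun X => ∑ a, X a * pd a u X

/-- The eight vector fields `Γ = (∂, Ω, S)`. -/
def Gam : Fin 8 → (Pt → ℝ) → Pt → ℝ :=
  ![pd 0, pd 1, pd 2, pd 3, rot 1 2, rot 1 3, rot 2 3, scal]

/-- `Γ^α` for a multi-index `α` (a word in the eight fields) of length `m`. -/
def GamComp : ∀ {m : ℕ}, (Fin m → Fin 8) → (Pt → ℝ) → Pt → ℝ
  | 0, _, u => u
  | _ + 1, α, u => Gam (α 0) (GamComp (fun i => α i.succ) u)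

/-- Euclidean length `r = |x|` of a spatial point. -/
def rad (x : Sp) : ℝ := Real.sqrt (∑ i, (x i) ^ 2)

/-- Japanese bracket `⟨z⟩ = (1+z²)^{1/2}`. -/
def jb (z : ℝ) : ℝ := Real.sqrt (1 + z ^ 2)

/-- Euclidean norm `|∂u|` of the space-time gradient. -/
def gradNorm (u : Pt → ℝ) (X : Pt) : ℝ := Real.sqrt (∑ a, (pd a u X) ^ 2)

/-- The unit-speed d'Alembertian `□ = ∂_t² - Δ_x`. -/
def box1 (u : Pt → ℝ) : Pt → ℝ := fun X =>
  pd 0 (pd 0 u) X - ∑ j : Fin 3, pd j.succ (pd j.succ u) X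

/-- The d'Alembertian `∂_t² - c²Δ_x` with speed `c`. -/
def boxc (c : ℝ) (u : Pt → ℝ) : Pt → ℝ := fun X =>
  pd 0 (pd 0 u) X - c ^ 2 * ∑ j : Fin 3, pd j.succ (pd j.succ u) X

/-- The recurring right-hand factor
`Σ_{|α|≤1}‖Γ^α u'(t,·)‖₂ + ‖⟨t+r⟩(∂_t²-c²Δ)u(t,·)‖₂`. -/
def Qfac (cs : ℝ) (u : Pt → ℝ) (t : ℝ) : ℝ :=
  (∑ m ∈ Finset.range 2, ∑ α : Fin m → Fin 8,
      (∫ x : Sp, ∑ a, (GamComp α (pd a u) (Fin.cons t x)) ^ 2) ^ ((1:ℝ)/2))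
    + (∫ x : Sp, jb (t + rad x) ^ 2 * (boxc cs u (Fin.cons t x)) ^ 2) ^ ((1:ℝ)/2)

/-- `|∂²u|`: the sum of the absolute values of all second space-time derivatives. -/
def d2abs (u : Pt → ℝ) (X : Pt) : ℝ := ∑ a, ∑ b, |pd a (pd b u) X|


/-! ### Infrastructure -/

/-- Smooth and compactly supported. -/
def Good (F : Pt → ℝ) : Prop := ContDiff ℝ (⊤ : ℕ∞) F ∧ HasCompactSupport F

lemma contDiff_pd {F : Pt → ℝ} (h : ContDiff ℝ (⊤ : ℕ∞) F) (a : Fin 4) :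
    ContDiff ℝ (⊤ : ℕ∞) (pd a F) := by
  unfold pd
  exact (h.fderiv_right (m := (⊤ : ℕ∞)) (by simp)).clm_apply contDiff_const

lemma Good.pd {F : Pt → ℝ} (h : Good F) (a : Fin 4) : Good (pd a F) :=
  ⟨contDiff_pd h.1 a, h.2.fderiv_apply ℝ (Pi.single a (1 : ℝ))⟩

lemma Good.mul {F G : Pt → ℝ} (h : ContDiff ℝ (⊤ : ℕ∞) F) (h' : Good G) :
    Good (fun X => F X * G X) :=
  ⟨h.mul h'.1, h'.2.mul_left⟩

lemma contDiff_differentiable {F : Pt → ℝ} (h : ContDiff ℝ (⊤ : ℕ∞) F) : Differentiable ℝ F :=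
  h.differentiable (by simp)

lemma pd_mul {F G : Pt → ℝ} (hF : ContDiff ℝ (⊤ : ℕ∞) F) (hG : ContDiff ℝ (⊤ : ℕ∞) G)
    (a : Fin 4) (X : Pt) :
    pd a (fun X => F X * G X) X = pd a F X * G X + F X * pd a G X := by
  unfold pd
  rw [fderiv_fun_mul (contDiff_differentiable hF X) (contDiff_differentiable hG X)]
  simp; ring

lemma pd_comm {F : Pt → ℝ} (hF : ContDiff ℝ (⊤ : ℕ∞) F) (a b : Fin 4) (X : Pt) :
    pd a (pd b F) X = pd b (pd a F) X := by
  have hd : DifferentiableAt ℝ (fderiv ℝ F) X :=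
    ((hF.fderiv_right (m := (⊤ : ℕ∞)) (by simp)).differentiable (by simp)) X
  have key : ∀ a b : Fin 4, pd a (pd b F) X =
      fderiv ℝ (fderiv ℝ F) X (Pi.single a 1) (Pi.single b 1) := by
    intro a b
    change fderiv ℝ (fun Y => fderiv ℝ F Y (Pi.single b 1)) X (Pi.single a 1) = _
    rw [fderiv_clm_apply hd (differentiableAt_const _)]
    simp
  rw [key, key]
  exact (hF.contDiffAt.isSymmSndFDerivAt (by
    have h2 : ((2 : ℕ∞) : WithTop ℕ∞) ≤ ((⊤ : ℕ∞) : WithTop ℕ∞) := WithTop.coe_le_coe.2 le_top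
    simpa using h2)) _ _

lemma pd_comp {F : Pt → ℝ} (hF : ContDiff ℝ (⊤ : ℕ∞) F) {φ : ℝ → ℝ} {d : ℝ} (a : Fin 4) (X : Pt)
    (hφ : HasDerivAt φ d (F X)) :
    pd a (fun Y => φ (F Y)) X = d * pd a F X := by
  have h := hφ.comp_hasFDerivAt X (contDiff_differentiable hF X).hasFDerivAt
  unfold pd
  have h2 := h.fderiv
  change fderiv ℝ (fun Y => φ (F Y)) X = _ at h2
  rw [h2]; simp

lemma pd_coord (a b : Fin 4) (X : Pt) :
    pd a (fun Y => Y b) X = if b = a then 1 else 0 := by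
  unfold pd
  have : HasFDerivAt (fun Y : Pt => Y b) (ContinuousLinearMap.proj (R := ℝ) (φ := fun _ : Fin 4 => ℝ) b) X :=
    (ContinuousLinearMap.proj (R := ℝ) (φ := fun _ : Fin 4 => ℝ) b).hasFDerivAt
  rw [this.fderiv]
  simp [Pi.single_apply]

lemma contDiff_coord (b : Fin 4) : ContDiff ℝ (⊤ : ℕ∞) (fun Y : Pt => Y b) :=
  contDiff_apply ℝ ℝ b

/-- Insertion of space at time `t`. -/
lemma hasFDerivAt_slice (t : ℝ) (x : Sp) :
    HasFDerivAt (fun x : Sp => (Fin.cons t x : Pt))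
      (ContinuousLinearMap.pi (Fin.cons 0 (fun i => ContinuousLinearMap.proj i) :
        Fin 4 → (Sp →L[ℝ] ℝ))) x := by
  rw [hasFDerivAt_pi]
  intro i
  refine Fin.cases ?_ (fun j => ?_) i
  · simpa using hasFDerivAt_const (𝕜 := ℝ) t x
  · simpa using hasFDerivAt_apply (𝕜 := ℝ) j x

lemma continuous_slice (t : ℝ) : Continuous (fun x : Sp => (Fin.cons t x : Pt)) :=
  continuous_iff_continuousAt.2 fun x => (hasFDerivAt_slice t x).continuousAt

lemma isClosedEmbedding_slice (t : ℝ) :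
    Topology.IsClosedEmbedding (fun x : Sp => (Fin.cons t x : Pt)) := by
  apply Topology.IsClosedEmbedding.of_continuous_injective_isClosedMap
  · exact continuous_slice t
  · intro x y h
    exact Fin.cons_right_injective (α := fun _ => ℝ) t h
  · apply Topology.IsClosedEmbedding.isClosedMap
    have hl : Function.LeftInverse (fun X : Pt => (fun i => X i.succ : Sp))
        (fun x : Sp => (Fin.cons t x : Pt)) := by
      intro x; ext i; simp
    exact hl.isClosedEmbedding (by fun_prop) (continuous_slice t)

lemma Good.slice {F : Pt → ℝ} (h : Good F) (t : ℝ) :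
    Continuous (fun x : Sp => F (Fin.cons t x)) ∧
    HasCompactSupport (fun x : Sp => F (Fin.cons t x)) :=
  ⟨h.1.continuous.comp (continuous_slice t),
    h.2.comp_isClosedEmbedding (isClosedEmbedding_slice t)⟩

lemma Good.integrable {F : Pt → ℝ} (h : Good F) (t : ℝ) :
    Integrable (fun x : Sp => F (Fin.cons t x)) :=
  (h.slice t).1.integrable_of_hasCompactSupport (h.slice t).2

lemma Good.integral_pd {F : Pt → ℝ} (h : Good F) (t : ℝ) (j : Fin 3) :
    ∫ x : Sp, _root_.pd j.succ F (Fin.cons t x) = 0 := by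
  have hd : ∀ x : Sp, HasFDerivAt (fun x : Sp => F (Fin.cons t x)) _ x := fun x =>
    HasFDerivAt.comp x (contDiff_differentiable h.1 (Fin.cons t x)).hasFDerivAt
      (hasFDerivAt_slice t x)
  have he : ∀ x : Sp, fderiv ℝ (fun x : Sp => F (Fin.cons t x)) x (Pi.single j 1)
      = _root_.pd j.succ F (Fin.cons t x) := by
    intro x
    rw [(hd x).fderiv]
    unfold _root_.pd
    simp only [ContinuousLinearMap.comp_apply]
    congr 1
    ext i
    refine Fin.cases ?_ (fun k => ?_) i
    · simp
    · simp [Pi.single_apply]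
  have := integral_mul_fderiv_eq_neg_fderiv_mul_of_integrable (𝕜 := ℝ) (μ := (volume : Measure Sp))
    (f := fun _ : Sp => (1 : ℝ)) (g := fun x : Sp => F (Fin.cons t x)) (v := Pi.single j 1)
    (by simp) (by simpa [he] using (h.pd j.succ).integrable t) (by simpa using h.integrable t)
    (by fun_prop) (fun x _ => (hd x).differentiableAt)
  simpa [he] using this

/-- `⟨x⟩` as a function on space-time. -/
def rho (X : Pt) : ℝ := Real.sqrt (1 + (X 1 ^ 2 + X 2 ^ 2 + X 3 ^ 2))

lemma rho_sq (X : Pt) : rho X ^ 2 = 1 + (X 1 ^ 2 + X 2 ^ 2 + X 3 ^ 2) :=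
  Real.sq_sqrt (by positivity)

lemma rho_pos (X : Pt) : 0 < rho X := Real.sqrt_pos.2 (by positivity)

lemma one_le_rho (X : Pt) : 1 ≤ rho X := by
  have := rho_sq X
  nlinarith [rho_pos X, sq_nonneg (X 1), sq_nonneg (X 2), sq_nonneg (X 3)]

lemma jb_rad (t : ℝ) (x : Sp) : jb (rad x) = rho (Fin.cons t x) := by
  unfold jb rad rho
  rw [Real.sq_sqrt (by positivity), Fin.sum_univ_three]
  rfl

lemma contDiff_rho : ContDiff ℝ (⊤ : ℕ∞) rho := by
  unfold rho
  apply ContDiff.sqrt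
  · fun_prop
  · intro X; positivity

lemma pd_rho (j : Fin 3) (X : Pt) : pd j.succ rho X = X j.succ / rho X := by
  have hN : ContDiff ℝ (⊤ : ℕ∞) (fun X : Pt => 1 + (X 1 ^ 2 + X 2 ^ 2 + X 3 ^ 2)) := by fun_prop
  have h0 : (1 + (X 1 ^ 2 + X 2 ^ 2 + X 3 ^ 2)) ≠ 0 := by positivity
  have h1 := pd_comp hN j.succ X (Real.hasDerivAt_sqrt h0)
  have h2 : pd j.succ (fun X : Pt => 1 + (X 1 ^ 2 + X 2 ^ 2 + X 3 ^ 2)) X = 2 * X j.succ := by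
    have hc : ∀ b : Fin 4, HasFDerivAt (fun Y : Pt => Y b)
        (ContinuousLinearMap.proj (R := ℝ) (φ := fun _ : Fin 4 => ℝ) b) X :=
      fun b => (ContinuousLinearMap.proj (R := ℝ) (φ := fun _ : Fin 4 => ℝ) b).hasFDerivAt
    have := ((((hc 1).pow 2).add ((hc 2).pow 2)).add ((hc 3).pow 2)).const_add 1
    unfold pd
    have h3 := this.fderiv
    simp only [Pi.add_apply] at h3
    erw [h3]
    fin_cases j <;> simp
  change pd j.succ (fun Y => Real.sqrt (1 + (Y 1 ^ 2 + Y 2 ^ 2 + Y 3 ^ 2))) X = _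
  rw [h1, h2]
  change 1 / (2 * rho X) * _ = _
  have := (rho_pos X).ne'
  field_simp

/-! ### Pointwise algebra -/

lemma abs_mul_le' {a b A B : ℝ} (ha : |a| ≤ A) (hb : |b| ≤ B) : |a * b| ≤ A * B := by
  rw [abs_mul]
  exact mul_le_mul ha hb (abs_nonneg _) ((abs_nonneg _).trans ha)

set_option maxHeartbeats 1000000 in
lemma alg_main {t r x y z s a b c d e11 e12 e13 e22 e23 e33 : ℝ}
    (ht : 0 ≤ t) (hr : 0 ≤ r) (hr2 : r ^ 2 = x ^ 2 + y ^ 2 + z ^ 2) (hs : 0 ≤ s)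
    (K0 : |t * a + x * b + y * c + z * d| ≤ s)
    (K1 : |t * b + x * e11 + y * e12 + z * e13| ≤ s)
    (K2 : |t * c + x * e12 + y * e22 + z * e23| ≤ s)
    (K3 : |t * d + x * e13 + y * e23 + z * e33| ≤ s)
    (O120 : |x * c - y * b| ≤ s) (O130 : |x * d - z * b| ≤ s) (O230 : |y * d - z * c| ≤ s)
    (O121 : |x * e12 - y * e11| ≤ s) (O122 : |x * e22 - y * e12| ≤ s)
    (O131 : |x * e13 - z * e11| ≤ s) (O133 : |x * e33 - z * e13| ≤ s)
    (O232 : |y * e23 - z * e22| ≤ s) (O233 : |y * e33 - z * e23| ≤ s)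
    (B : (t + r) * |a - (e11 + e22 + e33)| ≤ s) :
    |t - r| * |a| ≤ 11 * s ∧ |t - r| * |e11 + e22 + e33| ≤ 12 * s ∧
    |t - r| * |b| ≤ 31 * s ∧ |t - r| * |c| ≤ 31 * s ∧ |t - r| * |d| ≤ 31 * s := by
  have hx : |x| ≤ r := abs_le_of_sq_le_sq (by nlinarith [sq_nonneg y, sq_nonneg z]) hr
  have hy : |y| ≤ r := abs_le_of_sq_le_sq (by nlinarith [sq_nonneg x, sq_nonneg z]) hr
  have hz : |z| ≤ r := abs_le_of_sq_le_sq (by nlinarith [sq_nonneg x, sq_nonneg y]) hr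
  have htt : |t| ≤ t := (abs_of_nonneg ht).le
  set g := |t - r| with hg
  have hg0 : 0 ≤ g := abs_nonneg _
  have hgt : g ≤ t + r := abs_le.2 ⟨by linarith, by linarith⟩
  -- the case of the origin
  rcases eq_or_lt_of_le (add_nonneg ht hr) with h0 | hpos
  · have hg00 : g = 0 := by linarith
    rw [hg00]; simp; exact hs
  have hbox : r * |a - (e11 + e22 + e33)| ≤ s := by
    nlinarith [abs_nonneg (a - (e11 + e22 + e33))]
  have hgbox : g * |a - (e11 + e22 + e33)| ≤ s :=
    (mul_le_mul_of_nonneg_right hgt (abs_nonneg _)).trans B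
  have hrbox : |r ^ 2 * (a - (e11 + e22 + e33))| ≤ r * s := by
    rw [abs_mul, abs_of_nonneg (sq_nonneg r)]
    nlinarith
  have hgTR : |(t - r) * (t + r)| = g * (t + r) := by
    rw [abs_mul, abs_of_pos hpos]
  -- u00
  have Ha : (t + r) * (g * |a|) ≤ (t + r) * (11 * s) := by
    have hid : (t - r) * (t + r) * a =
        t * (t * a + x * b + y * c + z * d)
        - x * (t * b + x * e11 + y * e12 + z * e13)
        - y * (t * c + x * e12 + y * e22 + z * e23)
        - z * (t * d + x * e13 + y * e23 + z * e33)
        - r ^ 2 * (a - (e11 + e22 + e33))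
        - x * (x * e22 - y * e12) + y * (x * e12 - y * e11)
        - x * (x * e33 - z * e13) + z * (x * e13 - z * e11)
        - y * (y * e33 - z * e23) + z * (y * e23 - z * e22) := by
      linear_combination (e11 + e22 + e33 - a + a - (e11 + e22 + e33)) * hr2
        - (e11 + e22 + e33) * hr2
    have habs : (t + r) * (g * |a|) = |(t - r) * (t + r) * a| := by
      rw [abs_mul, hgTR]; ring
    rw [habs, hid]
    have := abs_le.1 (abs_mul_le' htt K0)
    have := abs_le.1 (abs_mul_le' hx K1)
    have := abs_le.1 (abs_mul_le' hy K2)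
    have := abs_le.1 (abs_mul_le' hz K3)
    have := abs_le.1 hrbox
    have := abs_le.1 (abs_mul_le' hx O122)
    have := abs_le.1 (abs_mul_le' hy O121)
    have := abs_le.1 (abs_mul_le' hx O133)
    have := abs_le.1 (abs_mul_le' hz O131)
    have := abs_le.1 (abs_mul_le' hy O233)
    have := abs_le.1 (abs_mul_le' hz O232)
    have : 0 ≤ t * s := by positivity
    have : 0 ≤ r * s := by positivity
    rw [abs_le]
    constructor <;> linarith
  have Ha' : g * |a| ≤ 11 * s := le_of_mul_le_mul_left Ha hpos
  have Hd : g * |e11 + e22 + e33| ≤ 12 * s := by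
    have : |e11 + e22 + e33| ≤ |a| + |a - (e11 + e22 + e33)| := by
      have := abs_sub a (a - (e11 + e22 + e33))
      simpa using this
    nlinarith
  -- mixed derivatives
  have mixed : ∀ p q ξ η k : ℝ, |ξ| ≤ r → |k| ≤ s → |p| ≤ 2 * s → |η| ≤ 2 * (r * s) →
      t * q = k - ξ * (e11 + e22 + e33) - p →
      r ^ 2 * q = ξ * (t * a + x * b + y * c + z * d) - t * ξ * a + η →
      g * |q| ≤ 31 * s := by
    intro p q ξ η k hξ hk hp hη h1 h2
    have e1 : t * |q| ≤ 3 * s + r * |e11 + e22 + e33| := by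
      have h6 : t * |q| = |t * q| := by rw [abs_mul, abs_of_nonneg ht]
      rw [h6, h1]
      have := abs_le.1 (abs_mul_le' hξ (le_refl |e11 + e22 + e33|))
      have := abs_le.1 hk
      have := abs_le.1 hp
      rw [abs_le]; constructor <;> linarith
    have e2 : r * (r * |q|) ≤ r * (3 * s + t * |a|) := by
      have : r * (r * |q|) = |r ^ 2 * q| := by
        rw [abs_mul, abs_of_nonneg (sq_nonneg r)]; ring
      rw [this, h2]
      have := abs_le.1 (abs_mul_le' hξ K0)
      have h5 := abs_le.1 (abs_mul_le' htt (abs_mul_le' hξ (le_refl |a|)))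
      have := abs_le.1 hη
      rw [abs_le]; constructor <;> linarith
    have e3 : r * |q| ≤ 3 * s + t * |a| := by
      rcases eq_or_lt_of_le hr with h | h
      · rw [← h]; simp; positivity
      · exact le_of_mul_le_mul_left e2 h
    have : (t + r) * (g * |q|) ≤ (t + r) * (31 * s) := by
      have f1 : g * (t * |q|) ≤ g * (3 * s + r * |e11 + e22 + e33|) :=
        mul_le_mul_of_nonneg_left e1 hg0
      have f2 : g * (r * |q|) ≤ g * (3 * s + t * |a|) := mul_le_mul_of_nonneg_left e3 hg0
      have f3 : r * (g * |e11 + e22 + e33|) ≤ r * (12 * s) := mul_le_mul_of_nonneg_left Hd hr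
      have f4 : t * (g * |a|) ≤ t * (11 * s) := mul_le_mul_of_nonneg_left Ha' ht
      have f5 : g * s ≤ (t + r) * s := mul_le_mul_of_nonneg_right hgt hs
      have : 0 ≤ t * s := by positivity
      have : 0 ≤ r * s := by positivity
      linarith
    exact le_of_mul_le_mul_left this hpos
  refine ⟨Ha', Hd, ?_, ?_, ?_⟩
  · refine mixed (-(x * e22 - y * e12) - (x * e33 - z * e13)) b x
      (-(y * (x * c - y * b)) - z * (x * d - z * b)) _ hx K1 ?_ ?_ (by ring)
      (by rw [hr2]; ring)
    · have := abs_le.1 O122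
      have := abs_le.1 O133
      rw [abs_le]; constructor <;> linarith
    · have := abs_le.1 (abs_mul_le' hy O120)
      have := abs_le.1 (abs_mul_le' hz O130)
      rw [abs_le]; constructor <;> linarith
  · refine mixed ((x * e12 - y * e11) - (y * e33 - z * e23)) c y
      (x * (x * c - y * b) - z * (y * d - z * c)) _ hy K2 ?_ ?_ (by ring)
      (by rw [hr2]; ring)
    · have := abs_le.1 O121
      have := abs_le.1 O233
      rw [abs_le]; constructor <;> linarith
    · have := abs_le.1 (abs_mul_le' hx O120)
      have := abs_le.1 (abs_mul_le' hz O230)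
      rw [abs_le]; constructor <;> linarith
  · refine mixed ((x * e13 - z * e11) + (y * e23 - z * e22)) d z
      (x * (x * d - z * b) + y * (y * d - z * c)) _ hz K3 ?_ ?_ (by ring)
      (by rw [hr2]; ring)
    · have := abs_le.1 O131
      have := abs_le.1 O232
      rw [abs_le]; constructor <;> linarith
    · have := abs_le.1 (abs_mul_le' hx O130)
      have := abs_le.1 (abs_mul_le' hy O230)
      rw [abs_le]; constructor <;> linarith

/-! ### The pointwise Klainerman and Sideris estimate -/

/-- Square density of `Qfac`. -/
def sqd (u : Pt → ℝ) (t : ℝ) (x : Sp) : ℝ :=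
  (∑ m ∈ Finset.range 2, ∑ α : Fin m → Fin 8, ∑ a, (GamComp α (pd a u) (Fin.cons t x)) ^ 2)
    + jb (t + rad x) ^ 2 * (boxc 1 u (Fin.cons t x)) ^ 2

lemma sqd_box (u : Pt → ℝ) (t : ℝ) (x : Sp) :
    jb (t + rad x) ^ 2 * (boxc 1 u (Fin.cons t x)) ^ 2 ≤ sqd u t x := by
  unfold sqd
  have : 0 ≤ ∑ m ∈ Finset.range 2, ∑ α : Fin m → Fin 8,
      ∑ a, (GamComp α (pd a u) (Fin.cons t x)) ^ 2 := by positivity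
  linarith

lemma sqd_comp (u : Pt → ℝ) (t : ℝ) (x : Sp) {m : ℕ} (hm : m ∈ Finset.range 2)
    (α : Fin m → Fin 8) (a : Fin 4) :
    (GamComp α (pd a u) (Fin.cons t x)) ^ 2 ≤ sqd u t x := by
  unfold sqd
  have h1 : (GamComp α (pd a u) (Fin.cons t x)) ^ 2
      ≤ ∑ a, (GamComp α (pd a u) (Fin.cons t x)) ^ 2 :=
    Finset.single_le_sum (f := fun a => (GamComp α (pd a u) (Fin.cons t x)) ^ 2)
      (fun i _ => sq_nonneg _) (Finset.mem_univ a)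
  have h2 : ∑ a, (GamComp α (pd a u) (Fin.cons t x)) ^ 2
      ≤ ∑ α : Fin m → Fin 8, ∑ a, (GamComp α (pd a u) (Fin.cons t x)) ^ 2 :=
    Finset.single_le_sum (f := fun α : Fin m → Fin 8 =>
      ∑ a, (GamComp α (pd a u) (Fin.cons t x)) ^ 2)
      (fun i _ => by positivity) (Finset.mem_univ α)
  have h3 : ∑ α : Fin m → Fin 8, ∑ a, (GamComp α (pd a u) (Fin.cons t x)) ^ 2
      ≤ ∑ m ∈ Finset.range 2, ∑ α : Fin m → Fin 8,
          ∑ a, (GamComp α (pd a u) (Fin.cons t x)) ^ 2 :=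
    Finset.single_le_sum (f := fun m => ∑ α : Fin m → Fin 8,
      ∑ a, (GamComp α (pd a u) (Fin.cons t x)) ^ 2)
      (fun i _ => by positivity) hm
  have : 0 ≤ jb (t + rad x) ^ 2 * (boxc 1 u (Fin.cons t x)) ^ 2 := by positivity
  linarith

lemma sqd_pd (u : Pt → ℝ) (t : ℝ) (x : Sp) (a : Fin 4) :
    (pd a u (Fin.cons t x)) ^ 2 ≤ sqd u t x :=
  sqd_comp u t x (m := 0) (by simp) Fin.elim0 a

lemma sqd_Gam (u : Pt → ℝ) (t : ℝ) (x : Sp) (k : Fin 8) (a : Fin 4) :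
    (Gam k (pd a u) (Fin.cons t x)) ^ 2 ≤ sqd u t x :=
  sqd_comp u t x (m := 1) (by simp) (fun _ => k) a

lemma sqd_nonneg (u : Pt → ℝ) (t : ℝ) (x : Sp) : 0 ≤ sqd u t x :=
  (sq_nonneg _).trans (sqd_pd u t x 0)

lemma weight_sq {ρ t r g a s k : ℝ} (hg : g = |t - r|) (hρ : |ρ - r| ≤ 1) (hs : 0 ≤ s)
    (h1 : g * |a| ≤ k * s) (h2 : |a| ≤ 3 * s) (hk : k ≤ 31) :
    (1 + (t - ρ) ^ 2) * a ^ 2 ≤ 1200 * s ^ 2 := by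
  have h3 : |t - ρ| ≤ g + 1 := by
    rw [hg]
    have := abs_add_le (t - r) (r - ρ)
    rw [abs_sub_comm r ρ] at this
    have h4 : t - r + (r - ρ) = t - ρ := by ring
    rw [h4] at this; linarith
  have h4 : |t - ρ| * |a| ≤ 34 * s := by nlinarith [abs_nonneg a]
  have h5 : (|t - ρ| * |a|) ^ 2 ≤ (34 * s) ^ 2 := pow_le_pow_left₀ (by positivity) h4 2
  have h6 : |a| ^ 2 ≤ (3 * s) ^ 2 := pow_le_pow_left₀ (by positivity) h2 2
  rw [mul_pow, sq_abs, sq_abs] at h5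
  rw [sq_abs] at h6
  nlinarith [sq_nonneg s]

lemma pointwise {u : Pt → ℝ} (hu : ContDiff ℝ (⊤ : ℕ∞) u) {t : ℝ} (ht : 0 ≤ t) (x : Sp) :
    (∀ a : Fin 4, (1 + (t - rho (Fin.cons t x)) ^ 2) * (pd 0 (pd a u) (Fin.cons t x)) ^ 2
        ≤ 1200 * sqd u t x) ∧
    (1 + (t - rho (Fin.cons t x)) ^ 2) * (pd 1 (pd 1 u) (Fin.cons t x)
      + pd 2 (pd 2 u) (Fin.cons t x) + pd 3 (pd 3 u) (Fin.cons t x)) ^ 2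
        ≤ 1200 * sqd u t x := by
  set X : Pt := Fin.cons t x with hX
  set s := Real.sqrt (sqd u t x) with hsdef
  have hs : 0 ≤ s := Real.sqrt_nonneg _
  have hs2 : s ^ 2 = sqd u t x := Real.sq_sqrt (sqd_nonneg _ _ _)
  rw [← hs2]
  have X0 : X 0 = t := rfl
  have X1 : X 1 = x 0 := rfl
  have X2 : X 2 = x 1 := rfl
  have X3 : X 3 = x 2 := rfl
  have G : ∀ k a, |Gam k (pd a u) X| ≤ s := fun k a => Real.abs_le_sqrt (sqd_Gam u t x k a)
  have D : ∀ b a, |pd b (pd a u) X| ≤ s := by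
    intro b a
    fin_cases b
    · exact G 0 a
    · exact G 1 a
    · exact G 2 a
    · exact G 3 a
  have O12 : ∀ a, |x 0 * pd 2 (pd a u) X - x 1 * pd 1 (pd a u) X| ≤ s := fun a => G 4 a
  have O13 : ∀ a, |x 0 * pd 3 (pd a u) X - x 2 * pd 1 (pd a u) X| ≤ s := fun a => G 5 a
  have O23 : ∀ a, |x 1 * pd 3 (pd a u) X - x 2 * pd 2 (pd a u) X| ≤ s := fun a => G 6 a
  have S : ∀ a, |t * pd 0 (pd a u) X + x 0 * pd 1 (pd a u) X + x 1 * pd 2 (pd a u) X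
      + x 2 * pd 3 (pd a u) X| ≤ s := by
    intro a
    have h := G 7 a
    change |scal (pd a u) X| ≤ s at h
    unfold scal at h
    rw [Fin.sum_univ_four] at h
    exact h
  have hr : 0 ≤ rad x := Real.sqrt_nonneg _
  have hr2 : rad x ^ 2 = x 0 ^ 2 + x 1 ^ 2 + x 2 ^ 2 := by
    unfold rad
    rw [Real.sq_sqrt (by positivity), Fin.sum_univ_three]
  have hB : (t + rad x) * |pd 0 (pd 0 u) X - (pd 1 (pd 1 u) X + pd 2 (pd 2 u) X
      + pd 3 (pd 3 u) X)| ≤ s := by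
    have h := sqd_box u t x
    have hb : boxc 1 u X = pd 0 (pd 0 u) X - (pd 1 (pd 1 u) X + pd 2 (pd 2 u) X
      + pd 3 (pd 3 u) X) := by
      unfold boxc
      rw [Fin.sum_univ_three]
      simp only [one_pow, one_mul]
      rfl
    rw [← hX, hb] at h
    apply Real.le_sqrt_of_sq_le
    refine le_trans ?_ h
    rw [mul_pow, sq_abs]
    apply mul_le_mul_of_nonneg_right _ (sq_nonneg _)
    unfold jb
    rw [Real.sq_sqrt (by positivity)]
    linarith
  have c := fun a b => pd_comm hu a b X
  have key := alg_main ht hr hr2 hs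
    (a := pd 0 (pd 0 u) X) (b := pd 0 (pd 1 u) X) (c := pd 0 (pd 2 u) X) (d := pd 0 (pd 3 u) X)
    (e11 := pd 1 (pd 1 u) X) (e12 := pd 1 (pd 2 u) X) (e13 := pd 1 (pd 3 u) X)
    (e22 := pd 2 (pd 2 u) X) (e23 := pd 2 (pd 3 u) X) (e33 := pd 3 (pd 3 u) X)
    (by rw [c 0 1, c 0 2, c 0 3]; exact S 0)
    (by rw [c 1 2, c 1 3]; exact S 1)
    (by rw [c 2 3]; exact S 2)
    (S 3)
    (by rw [c 0 1, c 0 2]; exact O12 0) (by rw [c 0 1, c 0 3]; exact O13 0)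
    (by rw [c 0 2, c 0 3]; exact O23 0)
    (by rw [c 1 2]; exact O12 1) (O12 2)
    (by rw [c 1 3]; exact O13 1) (O13 3)
    (by rw [c 2 3]; exact O23 2) (O23 3) hB
  obtain ⟨ka, kd, k1, k2, k3⟩ := key
  have hρ : |rho X - rad x| ≤ 1 := by
    have e : rho X ^ 2 = 1 + rad x ^ 2 := by rw [rho_sq, hr2, X1, X2, X3]
    have := rho_pos X
    rw [abs_le]; constructor <;> nlinarith
  have D3 : ∀ b a, |pd b (pd a u) X| ≤ 3 * s := fun b a => (D b a).trans (by linarith)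
  refine ⟨fun a => ?_, ?_⟩
  · fin_cases a
    · exact weight_sq rfl hρ hs ka (D3 0 0) (by norm_num)
    · exact weight_sq rfl hρ hs k1 (D3 0 1) (by norm_num)
    · exact weight_sq rfl hρ hs k2 (D3 0 2) (by norm_num)
    · exact weight_sq rfl hρ hs k3 (D3 0 3) (by norm_num)
  · refine weight_sq rfl hρ hs kd ?_ (by norm_num)
    have h1 := abs_le.1 (D 1 1)
    have h2 := abs_le.1 (D 2 2)
    have h3 := abs_le.1 (D 3 3)
    rw [abs_le]; constructor <;> linarith

/-! ### The weighted elliptic estimate -/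

lemma young {w p h k : ℝ} (hk : w ^ 2 ≤ 4 * k ^ 2) {c : ℝ} (hc : 0 < c) :
    |w * p * h| ≤ (1 + k ^ 2) * h ^ 2 / c + c * p ^ 2 := by
  have h1 : |w * p * h| ≤ w ^ 2 * h ^ 2 / (4 * c) + c * p ^ 2 := by
    have : w ^ 2 * h ^ 2 / (4 * c) + c * p ^ 2 - |w * p * h|
        = (|w * h| - 2 * c * |p|) ^ 2 / (4 * c) := by
      have e : |w * p * h| = |w * h| * |p| := by rw [← abs_mul]; ring_nf
      rw [e]
      have e2 : w ^ 2 * h ^ 2 = |w * h| ^ 2 := by rw [sq_abs]; ring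
      rw [e2, ← sq_abs p]
      field_simp
      ring
    have h0 : 0 ≤ (|w * h| - 2 * c * |p|) ^ 2 / (4 * c) := by positivity
    linarith
  have h2 : w ^ 2 * h ^ 2 / (4 * c) ≤ (1 + k ^ 2) * h ^ 2 / c := by
    rw [div_le_div_iff₀ (by positivity) hc]
    nlinarith [mul_nonneg (sub_nonneg.2 hk) (mul_nonneg (sq_nonneg h) hc.le),
      mul_nonneg (sq_nonneg h) hc.le]
  linarith

/-- The weight. -/
def Wt (t : ℝ) (X : Pt) : ℝ := 1 + (t - rho X) ^ 2

lemma contDiff_Wt (t : ℝ) : ContDiff ℝ (⊤ : ℕ∞) (Wt t) := by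
  unfold Wt
  exact contDiff_const.add ((contDiff_const.sub contDiff_rho).pow 2)

lemma pd_Wt (t : ℝ) (j : Fin 3) (X : Pt) :
    pd j.succ (Wt t) X = -2 * (t - rho X) * (X j.succ / rho X) := by
  have h : HasDerivAt (fun y : ℝ => 1 + (t - y) ^ 2) (-2 * (t - rho X)) (rho X) := by
    have := (((hasDerivAt_id (rho X)).const_sub t).pow 2).const_add 1
    refine this.congr_deriv ?_
    simp
  have := pd_comp contDiff_rho j.succ X h
  rw [pd_rho] at this
  exact this

lemma coord_sq_le (j : Fin 3) (X : Pt) : X j.succ ^ 2 ≤ rho X ^ 2 := by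
  rw [rho_sq]
  have := sq_nonneg (X 1)
  have := sq_nonneg (X 2)
  have := sq_nonneg (X 3)
  fin_cases j
  · change X 1 ^ 2 ≤ _; linarith
  · change X 2 ^ 2 ≤ _; linarith
  · change X 3 ^ 2 ≤ _; linarith

lemma pd_Wt_sq (t : ℝ) (j : Fin 3) (X : Pt) :
    pd j.succ (Wt t) X ^ 2 ≤ 4 * (t - rho X) ^ 2 := by
  rw [pd_Wt]
  have h : (X j.succ / rho X) ^ 2 ≤ 1 := by
    rw [div_pow]
    exact (div_le_one (pow_pos (rho_pos X) 2)).2 (coord_sq_le j X)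
  nlinarith [sq_nonneg (t - rho X), mul_nonneg (sq_nonneg (t - rho X)) (sub_nonneg.2 h)]

/-- The divergence terms. -/
def Phi (u : Pt → ℝ) (t : ℝ) (i j : Fin 3) (X : Pt) : ℝ :=
  pd i.succ (fun X => Wt t X * (pd j.succ u X * pd j.succ (pd i.succ u) X)) X
    - pd j.succ (fun X => Wt t X * (pd j.succ u X * pd i.succ (pd i.succ u) X)) X

lemma Good.mul2 {F G H : Pt → ℝ} (hF : ContDiff ℝ (⊤ : ℕ∞) F) (hG : ContDiff ℝ (⊤ : ℕ∞) G)
    (hH : Good H) : Good (fun X => F X * (G X * H X)) := Good.mul hF (Good.mul hG hH)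

lemma Phi_integrable {u : Pt → ℝ} (hu : Good u) (t : ℝ) (i j : Fin 3) :
    Integrable (fun x : Sp => Phi u t i j (Fin.cons t x)) := by
  unfold Phi
  exact ((Good.mul2 (contDiff_Wt t) (hu.pd _).1 ((hu.pd _).pd _)).pd _ |>.integrable t).sub
    ((Good.mul2 (contDiff_Wt t) (hu.pd _).1 ((hu.pd _).pd _)).pd _ |>.integrable t)

lemma Phi_integral {u : Pt → ℝ} (hu : Good u) (t : ℝ) (i j : Fin 3) :
    ∫ x : Sp, Phi u t i j (Fin.cons t x) = 0 := by
  unfold Phi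
  rw [integral_sub ((Good.mul2 (contDiff_Wt t) (hu.pd _).1 ((hu.pd _).pd _)).pd _ |>.integrable t)
    ((Good.mul2 (contDiff_Wt t) (hu.pd _).1 ((hu.pd _).pd _)).pd _ |>.integrable t),
    (Good.mul2 (contDiff_Wt t) (hu.pd _).1 ((hu.pd _).pd _)).integral_pd,
    (Good.mul2 (contDiff_Wt t) (hu.pd _).1 ((hu.pd _).pd _)).integral_pd, sub_zero]

lemma Phi_eq {u : Pt → ℝ} (hu : Good u) (t : ℝ) (i j : Fin 3) (X : Pt) :
    Phi u t i j X =
      pd i.succ (Wt t) X * pd j.succ u X * pd i.succ (pd j.succ u) X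
      - pd j.succ (Wt t) X * pd j.succ u X * pd i.succ (pd i.succ u) X
      + Wt t X * ((pd i.succ (pd j.succ u) X) ^ 2
        - pd i.succ (pd i.succ u) X * pd j.succ (pd j.succ u) X) := by
  unfold Phi
  have h := fun a => (hu.pd a).1
  have h2 := fun a b => ((hu.pd a).pd b).1
  rw [pd_mul (contDiff_Wt t) ((h _).mul (h2 _ _)), pd_mul (contDiff_Wt t) ((h _).mul (h2 _ _)),
    pd_mul (h _) (h2 _ _), pd_mul (h _) (h2 _ _), pd_comm (h i.succ) i.succ j.succ,
    pd_comm hu.1 j.succ i.succ]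
  ring

lemma elliptic_pw {u : Pt → ℝ} (hu : Good u) (t : ℝ) (X : Pt) :
    Wt t X * (∑ i : Fin 3, ∑ j : Fin 3, (pd i.succ (pd j.succ u) X) ^ 2) ≤
      2 * (Wt t X * (pd 1 (pd 1 u) X + pd 2 (pd 2 u) X + pd 3 (pd 3 u) X) ^ 2)
      + 96 * (∑ j : Fin 3, pd j.succ u X ^ 2)
      + 2 * ∑ i : Fin 3, ∑ j : Fin 3, Phi u t i j X := by
  have y1 : ∀ i j : Fin 3,
      -(pd i.succ (Wt t) X * pd j.succ u X * pd i.succ (pd j.succ u) X) ≤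
      Wt t X * (pd i.succ (pd j.succ u) X) ^ 2 / 4 + 4 * pd j.succ u X ^ 2 := fun i j =>
    (neg_le_abs _).trans (young (pd_Wt_sq t i X) (by norm_num))
  have y2 : ∀ i j : Fin 3,
      pd j.succ (Wt t) X * pd j.succ u X * pd i.succ (pd i.succ u) X ≤
      Wt t X * (pd i.succ (pd i.succ u) X) ^ 2 / 12 + 12 * pd j.succ u X ^ 2 := fun i j =>
    (le_abs_self _).trans (young (pd_Wt_sq t j X) (by norm_num))
  have hW : 0 ≤ Wt t X := by unfold Wt; positivity
  have y3 : ∀ i j : Fin 3, 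
      Wt t X * ((pd i.succ (pd j.succ u) X) ^ 2
        - pd i.succ (pd i.succ u) X * pd j.succ (pd j.succ u) X)
      - (Wt t X * (pd i.succ (pd j.succ u) X) ^ 2 / 4 + 4 * pd j.succ u X ^ 2)
      - (Wt t X * (pd i.succ (pd i.succ u) X) ^ 2 / 12 + 12 * pd j.succ u X ^ 2)
      ≤ Phi u t i j X := by
    intro i j
    rw [Phi_eq hu]
    linarith [y1 i j, y2 i j]
  have y4 := Finset.sum_le_sum (s := Finset.univ) fun i _ =>
    Finset.sum_le_sum (s := Finset.univ) fun j _ => y3 i j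
  have n12 := mul_nonneg hW (sq_nonneg (pd (Fin.succ 0) (pd (Fin.succ 1) u) X))
  have n13 := mul_nonneg hW (sq_nonneg (pd (Fin.succ 0) (pd (Fin.succ 2) u) X))
  have n21 := mul_nonneg hW (sq_nonneg (pd (Fin.succ 1) (pd (Fin.succ 0) u) X))
  have n23 := mul_nonneg hW (sq_nonneg (pd (Fin.succ 1) (pd (Fin.succ 2) u) X))
  have n31 := mul_nonneg hW (sq_nonneg (pd (Fin.succ 2) (pd (Fin.succ 0) u) X))
  have n32 := mul_nonneg hW (sq_nonneg (pd (Fin.succ 2) (pd (Fin.succ 1) u) X))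
  have e1 : (1 : Fin 4) = Fin.succ (0 : Fin 3) := rfl
  have e2 : (2 : Fin 4) = Fin.succ (1 : Fin 3) := rfl
  have e3 : (3 : Fin 4) = Fin.succ (2 : Fin 3) := rfl
  rw [e1, e2, e3]
  generalize hP : ∑ i : Fin 3, ∑ j : Fin 3, Phi u t i j X = P at *
  simp only [Fin.sum_univ_three] at y4 ⊢
  linarith

/-- All second derivatives, squared and weighted. -/
lemma second_order {u : Pt → ℝ} (hu : Good u) {t : ℝ} (ht : 0 ≤ t)
    (hi : Integrable (fun x => sqd u t x)) :
    ∫ x : Sp, Wt t (Fin.cons t x) * (∑ a : Fin 4, ∑ b : Fin 4, (pd a (pd b u) (Fin.cons t x)) ^ 2)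
      ≤ 20000 * ∫ x, sqd u t x := by
  have hP : Integrable (fun x : Sp => ∑ i : Fin 3, ∑ j : Fin 3, Phi u t i j (Fin.cons t x)) :=
    integrable_finsetSum _ fun i _ => integrable_finsetSum _ fun j _ => Phi_integrable hu t i j
  have hP0 : ∫ x : Sp, ∑ i : Fin 3, ∑ j : Fin 3, Phi u t i j (Fin.cons t x) = 0 := by
    rw [integral_finsetSum _ fun i _ => integrable_finsetSum _ fun j _ => Phi_integrable hu t i j]
    apply Finset.sum_eq_zero
    intro i _
    rw [integral_finsetSum _ fun j _ => Phi_integrable hu t i j]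
    exact Finset.sum_eq_zero fun j _ => Phi_integral hu t i j
  have hle : ∫ x : Sp, Wt t (Fin.cons t x) *
        (∑ a : Fin 4, ∑ b : Fin 4, (pd a (pd b u) (Fin.cons t x)) ^ 2)
      ≤ ∫ x : Sp, (20000 * sqd u t x
        + 2 * ∑ i : Fin 3, ∑ j : Fin 3, Phi u t i j (Fin.cons t x)) := by
    apply integral_mono_of_nonneg
    · refine Filter.Eventually.of_forall fun x => ?_
      have : 0 ≤ Wt t (Fin.cons t x) := by unfold Wt; positivity
      dsimp only [Pi.zero_apply]
      positivity
    · exact (hi.const_mul _).add (hP.const_mul _)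
    · refine Filter.Eventually.of_forall fun x => ?_
      dsimp only
      have h1 := elliptic_pw hu t (Fin.cons t x)
      obtain ⟨h2, h3⟩ := pointwise hu.1 ht x
      have h4 := sqd_pd u t x
      have h5 : ∀ j : Fin 3, Wt t (Fin.cons t x) * (pd j.succ (pd 0 u) (Fin.cons t x)) ^ 2
        ≤ 1200 * sqd u t x := by
        intro j; rw [pd_comm hu.1]; exact h2 _
      have h5' : ∀ j : Fin 3, Wt t (Fin.cons t x) * (pd 0 (pd j.succ u) (Fin.cons t x)) ^ 2
        ≤ 1200 * sqd u t x := fun j => h2 _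
      have h6 : Wt t (Fin.cons t x) * (pd 0 (pd 0 u) (Fin.cons t x)) ^ 2
        ≤ 1200 * sqd u t x := h2 0
      change Wt t (Fin.cons t x) * _ ≤ _ at h3
      have h7 : ∑ j : Fin 3, pd j.succ u (Fin.cons t x) ^ 2 ≤ 3 * sqd u t x := by
        rw [Fin.sum_univ_three]
        linarith [h4 (Fin.succ 0), h4 (Fin.succ 1), h4 (Fin.succ 2)]
      have h8 : Wt t (Fin.cons t x) * ∑ a : Fin 4, ∑ b : Fin 4, (pd a (pd b u) (Fin.cons t x)) ^ 2
        = Wt t (Fin.cons t x) * (pd 0 (pd 0 u) (Fin.cons t x)) ^ 2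
          + ∑ j : Fin 3, Wt t (Fin.cons t x) * (pd j.succ (pd 0 u) (Fin.cons t x)) ^ 2
          + ∑ j : Fin 3, Wt t (Fin.cons t x) * (pd 0 (pd j.succ u) (Fin.cons t x)) ^ 2
          + Wt t (Fin.cons t x) *
            (∑ i : Fin 3, ∑ j : Fin 3, (pd i.succ (pd j.succ u) (Fin.cons t x)) ^ 2) := by
        rw [Fin.sum_univ_succ (n := 3)]
        simp_rw [Fin.sum_univ_succ (n := 3)]
        rw [Finset.sum_add_distrib, ← Finset.mul_sum, ← Finset.mul_sum]
        ring
      rw [h8]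
      have h9 := Finset.sum_le_sum (s := Finset.univ) fun j _ => h5 j
      have h10 := Finset.sum_le_sum (s := Finset.univ) fun j _ => h5' j
      simp only [Finset.sum_const, Finset.card_univ, Fintype.card_fin, nsmul_eq_mul] at h9 h10
      push_cast at h9 h10
      linarith [sqd_nonneg u t x]
  rw [integral_add (hi.const_mul _) (hP.const_mul _), integral_const_mul, integral_const_mul,
    hP0] at hle
  linarith

/-! ### The Hardy-type estimate for `v` -/

/-- The radial vector field. -/
def Vf (t : ℝ) (j : Fin 3) (X : Pt) : ℝ :=
  (3 + Real.arctan (rho X - t)) * (X j.succ * (rho X ^ 2)⁻¹)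

lemma contDiff_arc (t : ℝ) : ContDiff ℝ (⊤ : ℕ∞) (fun X => 3 + Real.arctan (rho X - t)) :=
  contDiff_const.add (Real.contDiff_arctan.comp (contDiff_rho.sub contDiff_const))

lemma contDiff_rhoinv : ContDiff ℝ (⊤ : ℕ∞) (fun X => (rho X ^ 2)⁻¹) :=
  (contDiff_rho.pow 2).inv fun X => (pow_pos (rho_pos X) 2).ne'

lemma contDiff_Vf (t : ℝ) (j : Fin 3) : ContDiff ℝ (⊤ : ℕ∞) (Vf t j) :=
  (contDiff_arc t).mul ((contDiff_coord _).mul contDiff_rhoinv)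

lemma pd_Vf (t : ℝ) (j : Fin 3) (X : Pt) :
    pd j.succ (Vf t j) X = (Wt t X)⁻¹ * (X j.succ ^ 2 * (rho X)⁻¹ ^ 3)
      + (3 + Real.arctan (rho X - t)) * ((rho X)⁻¹ ^ 2 - 2 * X j.succ ^ 2 * (rho X)⁻¹ ^ 4) := by
  have hρ := (rho_pos X).ne'
  have h1 : HasDerivAt (fun y : ℝ => 3 + Real.arctan (y - t)) ((Wt t X)⁻¹) (rho X) := by
    have := (((hasDerivAt_id (rho X)).sub_const t).arctan).const_add 3
    refine this.congr_deriv ?_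
    unfold Wt
    simp only [id]
    rw [one_div, mul_one, show (rho X - t) ^ 2 = (t - rho X) ^ 2 by ring]
  have h2 : HasDerivAt (fun y : ℝ => (y ^ 2)⁻¹) (-2 * (rho X)⁻¹ ^ 3) (rho X) := by
    have := ((hasDerivAt_id (rho X)).pow 2).inv (pow_ne_zero 2 hρ)
    refine this.congr_deriv ?_
    simp only [Pi.pow_apply, id]
    field_simp
    ring
  have e1 := pd_comp contDiff_rho j.succ X h1
  have e2 := pd_comp contDiff_rho j.succ X h2
  unfold Vf
  rw [pd_mul (contDiff_arc t) ((contDiff_coord _).mul contDiff_rhoinv),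
    pd_mul (contDiff_coord _) contDiff_rhoinv, e1, e2, pd_rho, pd_coord]
  simp only [if_true]
  field_simp
  ring

lemma hardy_pw {v : Pt → ℝ} (hv : Good v) (t : ℝ) (X : Pt) :
    v X ^ 2 * ((rho X ^ 2 - 1) / (rho X ^ 3 * Wt t X)) ≤
      25 * (∑ a : Fin 4, pd a v X ^ 2)
      + ∑ j : Fin 3, pd j.succ (fun X => Vf t j X * (v X * v X)) X := by
  have hW : 0 < Wt t X := by unfold Wt; positivity
  set g := 3 + Real.arctan (rho X - t) with hg
  have hg1 : 1 ≤ g := by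
    have := Real.neg_pi_div_two_lt_arctan (rho X - t)
    have := Real.pi_lt_d2
    linarith
  have hg5 : g ≤ 5 := by
    have := Real.arctan_lt_pi_div_two (rho X - t)
    have := Real.pi_lt_d2
    linarith
  set β := (rho X)⁻¹ with hβ
  have hβ0 : 0 < β := inv_pos.2 (rho_pos X)
  have hβρ : rho X * β = 1 := mul_inv_cancel₀ (rho_pos X).ne'
  have hr := rho_sq X
  have hsum : (X 1 ^ 2 + X 2 ^ 2 + X 3 ^ 2) * β ^ 2 = 1 - β ^ 2 := by
    have : (rho X * β) ^ 2 = 1 := by rw [hβρ]; norm_num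
    rw [mul_pow, hr] at this
    linarith
  have hdiv : ∀ j : Fin 3, pd j.succ (fun X => Vf t j X * (v X * v X)) X =
      ((Wt t X)⁻¹ * (X j.succ ^ 2 * β ^ 3) + g * (β ^ 2 - 2 * X j.succ ^ 2 * β ^ 4)) * v X ^ 2
      + 2 * (g * (X j.succ * β ^ 2)) * v X * pd j.succ v X := by
    intro j
    rw [pd_mul (contDiff_Vf t j) (hv.1.mul hv.1), pd_mul hv.1 hv.1, pd_Vf]
    have : Vf t j X = g * (X j.succ * β ^ 2) := by
      unfold Vf; rw [hβ, inv_pow]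
    rw [this]; ring
  have hlow : ∀ j : Fin 3, 
      ((Wt t X)⁻¹ * (X j.succ ^ 2 * β ^ 3) + g * (β ^ 2 - 2 * X j.succ ^ 2 * β ^ 4)) * v X ^ 2
      - (v X ^ 2 * (X j.succ ^ 2 * β ^ 4) + 25 * pd j.succ v X ^ 2)
      ≤ pd j.succ (fun X => Vf t j X * (v X * v X)) X := by
    intro j
    rw [hdiv j]
    have h1 : g ^ 2 ≤ 25 := by nlinarith
    have h2 := sq_nonneg (X j.succ * β ^ 2 * v X + g * pd j.succ v X)
    have h3 := mul_le_mul_of_nonneg_right h1 (sq_nonneg (pd j.succ v X))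
    nlinarith
  have hw : (rho X ^ 2 - 1) / (rho X ^ 3 * Wt t X) =
      (X 1 ^ 2 + X 2 ^ 2 + X 3 ^ 2) * β ^ 3 * (Wt t X)⁻¹ := by
    rw [hr, hβ]
    have := (rho_pos X).ne'
    field_simp
    ring
  rw [hw]
  have hl := Finset.sum_le_sum (s := Finset.univ) fun j _ => hlow j
  have h25 : ∑ a : Fin 4, pd a v X ^ 2 = pd 0 v X ^ 2 + ∑ j : Fin 3, pd j.succ v X ^ 2 :=
    Fin.sum_univ_succ _
  rw [h25]
  generalize hP : ∑ j : Fin 3, pd j.succ (fun X => Vf t j X * (v X * v X)) X = P at *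
  simp only [Fin.sum_univ_three] at hl ⊢
  have e1 : (Fin.succ (0 : Fin 3)) = 1 := rfl
  have e2 : (Fin.succ (1 : Fin 3)) = 2 := rfl
  have e3 : (Fin.succ (2 : Fin 3)) = 3 := rfl
  rw [e1, e2, e3] at hl
  rw [e1, e2, e3]
  have hsum4 : (X 1 ^ 2 + X 2 ^ 2 + X 3 ^ 2) * β ^ 4 = β ^ 2 - β ^ 4 := by
    linear_combination β ^ 2 * hsum
  have hpos : 0 ≤ (g * (β ^ 2 + 2 * β ^ 4) - (β ^ 2 - β ^ 4)) * v X ^ 2 := by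
    apply mul_nonneg _ (sq_nonneg _)
    nlinarith [pow_pos hβ0 2, pow_pos hβ0 4]
  have hl2 : (Wt t X)⁻¹ * ((X 1 ^ 2 + X 2 ^ 2 + X 3 ^ 2) * β ^ 3) * v X ^ 2
      + (g * (3 * β ^ 2 - 2 * (β ^ 2 - β ^ 4)) - (β ^ 2 - β ^ 4)) * v X ^ 2
      - 25 * (pd 1 v X ^ 2 + pd 2 v X ^ 2 + pd 3 v X ^ 2) ≤ P := by
    rw [← hsum4]
    linarith
  have := sq_nonneg (pd 0 v X)
  linarith

lemma hardy {v : Pt → ℝ} (hv : Good v) (t : ℝ) :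
    ∫ x : Sp, v (Fin.cons t x) ^ 2 * ((rho (Fin.cons t x) ^ 2 - 1) /
        (rho (Fin.cons t x) ^ 3 * Wt t (Fin.cons t x))) ≤
      25 * ∫ x : Sp, ∑ a : Fin 4, pd a v (Fin.cons t x) ^ 2 := by
  have hG : ∀ j : Fin 3, Good (fun X => Vf t j X * (v X * v X)) := fun j =>
    Good.mul2 (contDiff_Vf t j) hv.1 hv
  have hP : Integrable (fun x : Sp => ∑ j : Fin 3,
      pd j.succ (fun X => Vf t j X * (v X * v X)) (Fin.cons t x)) :=
    integrable_finsetSum _ fun j _ => ((hG j).pd _).integrable t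
  have hP0 : ∫ x : Sp, ∑ j : Fin 3,
      pd j.succ (fun X => Vf t j X * (v X * v X)) (Fin.cons t x) = 0 := by
    rw [integral_finsetSum _ fun j _ => ((hG j).pd _).integrable t]
    exact Finset.sum_eq_zero fun j _ => (hG j).integral_pd t j
  have hi : Integrable (fun x : Sp => ∑ a : Fin 4, pd a v (Fin.cons t x) ^ 2) := by
    refine integrable_finsetSum _ fun a _ => ?_
    simp_rw [pow_two]
    exact (Good.mul (hv.pd a).1 (hv.pd a)).integrable t
  have hle : ∫ x : Sp, v (Fin.cons t x) ^ 2 * ((rho (Fin.cons t x) ^ 2 - 1) /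
        (rho (Fin.cons t x) ^ 3 * Wt t (Fin.cons t x))) ≤
      ∫ x : Sp, (25 * (∑ a : Fin 4, pd a v (Fin.cons t x) ^ 2) + ∑ j : Fin 3,
      pd j.succ (fun X => Vf t j X * (v X * v X)) (Fin.cons t x)) := by
    apply integral_mono_of_nonneg
    · refine Filter.Eventually.of_forall fun x => ?_
      have h1 : 0 ≤ Wt t (Fin.cons t x) := by unfold Wt; positivity
      have h2 := rho_pos (Fin.cons t x)
      have h3 : 0 ≤ rho (Fin.cons t x) ^ 2 - 1 := by nlinarith [one_le_rho (Fin.cons t x)]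
      dsimp only [Pi.zero_apply]
      positivity
    · exact (hi.const_mul _).add hP
    · exact Filter.Eventually.of_forall fun x => hardy_pw hv t _
  rw [integral_add (hi.const_mul _) hP, integral_const_mul, hP0] at hle
  linarith

lemma weight_pw {t : ℝ} (ht : 0 ≤ t) (X : Pt) :
    (rho X ^ 4 * Wt t X)⁻¹ ≤ 17 * (jb t)⁻¹ ^ 2 * (rho X ^ 4)⁻¹
      + 36 * (jb t)⁻¹ ^ 3 * ((rho X ^ 2 - 1) / (rho X ^ 3 * Wt t X)) := by
  have hW1 : 1 ≤ Wt t X := by unfold Wt; nlinarith [sq_nonneg (t - rho X)]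
  have hW : 0 < Wt t X := by linarith
  have hρ := rho_pos X
  have hρ1 := one_le_rho X
  have hT2 : jb t ^ 2 = 1 + t ^ 2 := Real.sq_sqrt (by positivity)
  have hT : 0 < jb t := Real.sqrt_pos.2 (by positivity)
  have h0 : 0 ≤ (rho X ^ 2 - 1) / (rho X ^ 3 * Wt t X) := by
    have h3 : 0 ≤ rho X ^ 2 - 1 := by nlinarith
    positivity
  by_cases hc : jb t ^ 2 ≤ 17 * Wt t X
  · have h1 : (rho X ^ 4 * Wt t X)⁻¹ ≤ 17 * (jb t)⁻¹ ^ 2 * (rho X ^ 4)⁻¹ := by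
      rw [mul_inv, mul_comm]
      apply mul_le_mul_of_nonneg_right _ (by positivity)
      rw [inv_pow, ← div_eq_mul_inv, inv_eq_one_div, div_le_div_iff₀ hW (by positivity)]
      linarith
    have : 0 ≤ 36 * (jb t)⁻¹ ^ 3 * ((rho X ^ 2 - 1) / (rho X ^ 3 * Wt t X)) := by positivity
    linarith
  · push Not at hc
    have h4 : 4 < t := by nlinarith
    have hb : t < 2 * rho X := by
      by_contra hcon
      push Not at hcon
      have : Wt t X = 1 + (t - rho X) ^ 2 := rfl
      nlinarith
    have hρ2 : 2 ≤ rho X := by linarith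
    have hT3 : jb t ≤ 3 * rho X := by
      apply le_of_sq_le_sq _ (by positivity)
      rw [hT2]; nlinarith
    have hT4 : jb t ^ 3 ≤ (3 * rho X) ^ 3 := pow_le_pow_left₀ hT.le hT3 3
    have h1 : (rho X ^ 4 * Wt t X)⁻¹ ≤
        36 * (jb t)⁻¹ ^ 3 * ((rho X ^ 2 - 1) / (rho X ^ 3 * Wt t X)) := by
      have e : 36 * (jb t)⁻¹ ^ 3 * ((rho X ^ 2 - 1) / (rho X ^ 3 * Wt t X))
        = 36 * (rho X ^ 2 - 1) / (jb t ^ 3 * (rho X ^ 3 * Wt t X)) := by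
        field_simp
      rw [e, inv_eq_one_div, div_le_div_iff₀ (by positivity) (by positivity)]
      have h5 : jb t ^ 3 ≤ 36 * (rho X ^ 2 - 1) * rho X := by nlinarith
      have h6 := mul_le_mul_of_nonneg_right h5 (by positivity : 0 ≤ rho X ^ 3 * Wt t X)
      linarith
    have : 0 ≤ 17 * (jb t)⁻¹ ^ 2 * (rho X ^ 4)⁻¹ := by positivity
    linarith

/-! ### Conclusion -/

lemma Good.add {F G : Pt → ℝ} (h : Good F) (h' : Good G) : Good (fun X => F X + G X) :=
  ⟨h.1.add h'.1, h.2.add h'.2⟩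

lemma Good.sub {F G : Pt → ℝ} (h : Good F) (h' : Good G) : Good (fun X => F X - G X) := by
  have := h.add (Good.mul (contDiff_const (c := (-1 : ℝ))) h')
  convert this using 2
  ring

lemma Good.rot {F : Pt → ℝ} (h : Good F) (i j : Fin 4) : Good (rot i j F) :=
  (Good.mul (contDiff_coord i) (h.pd j)).sub (Good.mul (contDiff_coord j) (h.pd i))

lemma Good.scal {F : Pt → ℝ} (h : Good F) : Good (scal F) := by
  unfold _root_.scal
  simp_rw [Fin.sum_univ_four]
  have := fun a => Good.mul (contDiff_coord a) (h.pd a)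
  exact (((this 0).add (this 1)).add (this 2)).add (this 3)

lemma Good.Gam {F : Pt → ℝ} (h : Good F) (k : Fin 8) : Good (Gam k F) := by
  fin_cases k
  · exact h.pd 0
  · exact h.pd 1
  · exact h.pd 2
  · exact h.pd 3
  · exact h.rot 1 2
  · exact h.rot 1 3
  · exact h.rot 2 3
  · exact h.scal

lemma Good.GamComp {F : Pt → ℝ} (h : Good F) : ∀ {m : ℕ} (α : Fin m → Fin 8), Good (GamComp α F)
  | 0, _ => h
  | _ + 1, α => (Good.GamComp h (fun i => α i.succ)).Gam (α 0)

lemma Good.boxc {u : Pt → ℝ} (h : Good u) : Good (boxc 1 u) := by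
  unfold _root_.boxc
  simp_rw [Fin.sum_univ_three, one_pow, one_mul]
  exact ((h.pd _).pd _).sub (((((h.pd _).pd _)).add ((h.pd _).pd _)).add ((h.pd _).pd _))

lemma continuous_rad : Continuous rad := by
  unfold rad; fun_prop

lemma sum_sq_le {ι : Type*} (s : Finset ι) (f : ι → ℝ) (hf : ∀ i, 0 ≤ f i) :
    ∑ i ∈ s, f i ^ 2 ≤ (∑ i ∈ s, f i) ^ 2 := by
  classical
  induction s using Finset.induction_on with
  | empty => simp
  | insert a s ha ih =>
    rw [Finset.sum_insert ha, Finset.sum_insert ha]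
    have : 0 ≤ ∑ i ∈ s, f i := Finset.sum_nonneg fun i _ => hf i
    nlinarith [hf a, mul_nonneg (hf a) this]

lemma half_sq {y : ℝ} (hy : 0 ≤ y) : (y ^ ((1 : ℝ) / 2)) ^ 2 = y := by
  rw [← Real.sqrt_eq_rpow, Real.sq_sqrt hy]

lemma sqd_integral {u : Pt → ℝ} (hu : Good u) (t : ℝ) :
    Integrable (fun x => sqd u t x) ∧ ∫ x, sqd u t x ≤ Qfac 1 u t ^ 2 := by
  have i1 : ∀ (m : ℕ) (α : Fin m → Fin 8), Integrable (fun x : Sp =>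
      ∑ a, (GamComp α (pd a u) (Fin.cons t x)) ^ 2) := by
    intro m α
    refine integrable_finsetSum _ fun a _ => ?_
    simp_rw [pow_two]
    exact (Good.mul ((hu.pd a).GamComp α).1 ((hu.pd a).GamComp α)).integrable t
  have i2 : Integrable (fun x : Sp => ∑ m ∈ Finset.range 2, ∑ α : Fin m → Fin 8,
      ∑ a, (GamComp α (pd a u) (Fin.cons t x)) ^ 2) :=
    integrable_finsetSum _ fun m _ => integrable_finsetSum _ fun α _ => i1 m α
  have i3 : Integrable (fun x : Sp => jb (t + rad x) ^ 2 * (boxc 1 u (Fin.cons t x)) ^ 2) := by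
    have hb := hu.boxc.slice t
    apply Continuous.integrable_of_hasCompactSupport
    · apply Continuous.mul
      · unfold jb
        have := continuous_rad
        fun_prop
      · exact hb.1.pow 2
    · apply HasCompactSupport.mul_left
      simp_rw [pow_two]
      exact hb.2.mul_left
  refine ⟨i2.add i3, ?_⟩
  unfold sqd
  rw [integral_add i2 i3, integral_finsetSum _ fun m _ => integrable_finsetSum _ fun α _ => i1 m α]
  simp_rw [fun m => integral_finsetSum (Finset.univ : Finset (Fin m → Fin 8)) fun α _ => i1 m α]
  unfold Qfac
  have hA : ∀ (m : ℕ) (α : Fin m → Fin 8),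
      0 ≤ ∫ x : Sp, ∑ a, (GamComp α (pd a u) (Fin.cons t x)) ^ 2 := fun m α =>
    integral_nonneg fun x => by dsimp only [Pi.zero_apply]; positivity
  have hB : 0 ≤ ∫ x : Sp, jb (t + rad x) ^ 2 * (boxc 1 u (Fin.cons t x)) ^ 2 :=
    integral_nonneg fun x => by dsimp only [Pi.zero_apply]; positivity
  have h1 : ∑ m ∈ Finset.range 2, ∑ α : Fin m → Fin 8,
      (∫ x : Sp, ∑ a, (GamComp α (pd a u) (Fin.cons t x)) ^ 2) ≤
      (∑ m ∈ Finset.range 2, ∑ α : Fin m → Fin 8,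
      (∫ x : Sp, ∑ a, (GamComp α (pd a u) (Fin.cons t x)) ^ 2) ^ ((1:ℝ)/2)) ^ 2 := by
    refine le_trans (Finset.sum_le_sum fun m _ => ?_) (sum_sq_le _ _ fun m =>
      Finset.sum_nonneg fun α _ => Real.rpow_nonneg (hA m α) _)
    refine le_trans (le_of_eq ?_) (sum_sq_le _ _ fun α => Real.rpow_nonneg (hA m α) _)
    exact Finset.sum_congr rfl fun α _ => (half_sq (hA m α)).symm
  have h2 := half_sq hB
  have h3 : 0 ≤ ∑ m ∈ Finset.range 2, ∑ α : Fin m → Fin 8,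
      (∫ x : Sp, ∑ a, (GamComp α (pd a u) (Fin.cons t x)) ^ 2) ^ ((1:ℝ)/2) :=
    Finset.sum_nonneg fun m _ => Finset.sum_nonneg fun α _ => Real.rpow_nonneg (hA m α) _
  have h4 := Real.rpow_nonneg hB ((1:ℝ)/2)
  nlinarith [mul_nonneg h3 h4]

lemma Qfac_nonneg (u : Pt → ℝ) (t : ℝ) : 0 ≤ Qfac 1 u t := by
  unfold Qfac
  refine add_nonneg (Finset.sum_nonneg fun m _ => Finset.sum_nonneg fun α _ =>
    Real.rpow_nonneg (integral_nonneg fun x => ?_) _)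
    (Real.rpow_nonneg (integral_nonneg fun x => ?_) _) <;>
  · dsimp only [Pi.zero_apply]; positivity

lemma cauchy_schwarz {f g : Sp → ℝ} (hf : Continuous f) (hf' : HasCompactSupport f)
    (hg : Continuous g) (hg' : HasCompactSupport g) (f0 : ∀ x, 0 ≤ f x) (g0 : ∀ x, 0 ≤ g x)
    {A B : ℝ} (hA : 0 ≤ A) (hB : 0 ≤ B) (h1 : ∫ x, f x ^ 2 ≤ A ^ 2) (h2 : ∫ x, g x ^ 2 ≤ B ^ 2) :
    ∫ x, f x * g x ≤ A * B := by
  have h := integral_mul_le_Lp_mul_Lq_of_nonneg (μ := (volume : Measure Sp))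
    Real.HolderConjugate.two_two
    (Filter.Eventually.of_forall f0) (Filter.Eventually.of_forall g0)
    (hf.memLp_of_hasCompactSupport hf') (hg.memLp_of_hasCompactSupport hg')
  refine h.trans ?_
  simp_rw [Real.rpow_two]
  rw [← Real.sqrt_eq_rpow, ← Real.sqrt_eq_rpow]
  exact mul_le_mul (Real.sqrt_le_iff.2 ⟨hA, h1⟩) (Real.sqrt_le_iff.2 ⟨hB, h2⟩)
    (Real.sqrt_nonneg _) hA

lemma d2abs_sq (u : Pt → ℝ) (X : Pt) :
    d2abs u X ^ 2 ≤ 16 * ∑ a : Fin 4, ∑ b : Fin 4, (pd a (pd b u) X) ^ 2 := by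
  unfold d2abs
  refine (sq_sum_le_card_mul_sum_sq (s := Finset.univ)).trans ?_
  rw [Finset.mul_sum, Finset.mul_sum]
  refine Finset.sum_le_sum fun a _ => ?_
  have := sq_sum_le_card_mul_sum_sq (s := Finset.univ) (f := fun b => |pd a (pd b u) X|)
  simp only [sq_abs, Finset.card_univ, Fintype.card_fin] at this ⊢
  push_cast at this ⊢
  linarith

lemma d2abs_slice {u : Pt → ℝ} (hu : Good u) (t : ℝ) :
    Continuous (fun x : Sp => d2abs u (Fin.cons t x)) ∧
    HasCompactSupport (fun x : Sp => d2abs u (Fin.cons t x)) := by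
  have h := fun a b => ((hu.pd b).pd a).slice t
  have ha : ∀ a b, HasCompactSupport (fun x : Sp => |pd a (pd b u) (Fin.cons t x)|) :=
    fun a b => (h a b).2.comp_left (g := fun y : ℝ => |y|) abs_zero
  constructor
  · exact continuous_finsetSum _ fun a _ => continuous_finsetSum _ fun b _ => (h a b).1.abs
  · unfold d2abs
    simp_rw [Fin.sum_univ_four]
    have hb : ∀ a, HasCompactSupport (fun x : Sp => |pd a (pd 0 u) (Fin.cons t x)|
      + |pd a (pd 1 u) (Fin.cons t x)| + |pd a (pd 2 u) (Fin.cons t x)|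
      + |pd a (pd 3 u) (Fin.cons t x)|) := fun a =>
      (((ha a 0).add (ha a 1)).add (ha a 2)).add (ha a 3)
    exact (((hb 0).add (hb 1)).add (hb 2)).add (hb 3)

lemma v_bound {v : Pt → ℝ} (hv : Good v) {t : ℝ} (ht : 0 ≤ t) :
    ∫ x : Sp, v (Fin.cons t x) ^ 2 * (rho (Fin.cons t x) ^ 4 * Wt t (Fin.cons t x))⁻¹ ≤
      (5 * (jb t)⁻¹ * (∫ x : Sp, (v (Fin.cons t x)) ^ 2 / jb (rad x) ^ 4) ^ ((1:ℝ)/2)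
        + 30 * (jb t) ^ (-(4:ℝ)/3) *
          (∫ x : Sp, ∑ a, (pd a v (Fin.cons t x)) ^ 2) ^ ((1:ℝ)/2)) ^ 2 := by
  have hT2 : jb t ^ 2 = 1 + t ^ 2 := Real.sq_sqrt (by positivity)
  have hT : 0 < jb t := Real.sqrt_pos.2 (by positivity)
  have hT1 : 1 ≤ jb t := by nlinarith [sq_nonneg t]
  have hv2 : Good (fun X => v X * v X) := Good.mul hv.1 hv
  have c4 : ContDiff ℝ (⊤ : ℕ∞) (fun X => (rho X ^ 4)⁻¹) :=
    (contDiff_rho.pow 4).inv fun X => (pow_pos (rho_pos X) 4).ne'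
  have hW : ∀ X, 0 < Wt t X := fun X => by unfold Wt; positivity
  have c3 : ContDiff ℝ (⊤ : ℕ∞) (fun X => (rho X ^ 2 - 1) / (rho X ^ 3 * Wt t X)) :=
    ((contDiff_rho.pow 2).sub contDiff_const).div ((contDiff_rho.pow 3).mul (contDiff_Wt t))
      fun X => (mul_pos (pow_pos (rho_pos X) 3) (hW X)).ne'
  have i4 : Integrable (fun x : Sp => v (Fin.cons t x) ^ 2 * (rho (Fin.cons t x) ^ 4)⁻¹) := by
    convert (Good.mul c4 hv2).integrable t using 2
    ring
  have i3 : Integrable (fun x : Sp => v (Fin.cons t x) ^ 2 * ((rho (Fin.cons t x) ^ 2 - 1) /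
        (rho (Fin.cons t x) ^ 3 * Wt t (Fin.cons t x)))) := by
    convert (Good.mul c3 hv2).integrable t using 2
    ring
  have hle : ∫ x : Sp, v (Fin.cons t x) ^ 2 * (rho (Fin.cons t x) ^ 4 * Wt t (Fin.cons t x))⁻¹ ≤
      ∫ x : Sp, (17 * (jb t)⁻¹ ^ 2 * (v (Fin.cons t x) ^ 2 * (rho (Fin.cons t x) ^ 4)⁻¹)
        + 36 * (jb t)⁻¹ ^ 3 * (v (Fin.cons t x) ^ 2 * ((rho (Fin.cons t x) ^ 2 - 1) /
        (rho (Fin.cons t x) ^ 3 * Wt t (Fin.cons t x))))) := by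
    apply integral_mono_of_nonneg
    · refine Filter.Eventually.of_forall fun x => ?_
      have := hW (Fin.cons t x)
      have := rho_pos (Fin.cons t x)
      dsimp only [Pi.zero_apply]
      positivity
    · exact (i4.const_mul _).add (i3.const_mul _)
    · refine Filter.Eventually.of_forall fun x => ?_
      have := mul_le_mul_of_nonneg_left (weight_pw ht (Fin.cons t x))
        (sq_nonneg (v (Fin.cons t x)))
      dsimp only
      linarith
  rw [integral_add (i4.const_mul _) (i3.const_mul _), integral_const_mul, integral_const_mul] at hle
  have hI : ∫ x : Sp, (v (Fin.cons t x)) ^ 2 / jb (rad x) ^ 4 =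
      ∫ x : Sp, v (Fin.cons t x) ^ 2 * (rho (Fin.cons t x) ^ 4)⁻¹ := by
    simp_rw [jb_rad t, div_eq_mul_inv]
  rw [hI]
  have hh := hardy hv t
  set I1 := ∫ x : Sp, v (Fin.cons t x) ^ 2 * (rho (Fin.cons t x) ^ 4)⁻¹
  set I2 := ∫ x : Sp, ∑ a, (pd a v (Fin.cons t x)) ^ 2 with hI2
  have p1 : 0 ≤ I1 := integral_nonneg fun x => by
    have := rho_pos (Fin.cons t x)
    dsimp only [Pi.zero_apply]; positivity
  have p2 : 0 ≤ I2 := integral_nonneg fun x => by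
    dsimp only [Pi.zero_apply]; positivity
  have hτ : (jb t)⁻¹ ^ 3 ≤ ((jb t) ^ (-(4:ℝ)/3)) ^ 2 := by
    rw [← Real.rpow_natCast ((jb t) ^ (-(4:ℝ)/3)) 2, ← Real.rpow_mul hT.le, inv_pow,
      ← Real.rpow_natCast (jb t) 3, ← Real.rpow_neg hT.le]
    apply Real.rpow_le_rpow_of_exponent_le hT1
    norm_num
  have hτ0 : 0 ≤ (jb t) ^ (-(4:ℝ)/3) := Real.rpow_nonneg hT.le _
  set τ := (jb t) ^ (-(4:ℝ)/3)
  have q1 := half_sq p1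
  have q2 := half_sq p2
  have q1' := Real.rpow_nonneg p1 ((1:ℝ)/2)
  have q2' := Real.rpow_nonneg p2 ((1:ℝ)/2)
  set s1 := I1 ^ ((1:ℝ)/2)
  set s2 := I2 ^ ((1:ℝ)/2)
  have hi0 : 0 < (jb t)⁻¹ := inv_pos.2 hT
  set κ := (jb t)⁻¹
  have k1 := mul_le_mul_of_nonneg_left hh (by positivity : 0 ≤ 36 * κ ^ 3)
  have k2 : κ ^ 3 * I2 ≤ τ ^ 2 * I2 := mul_le_mul_of_nonneg_right hτ p2
  have k3 : 0 ≤ (κ * s1) * (τ * s2) := by positivity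
  have k4 : 0 ≤ κ ^ 2 * I1 := by positivity
  have k5 : (5 * κ * s1 + 30 * τ * s2) ^ 2 = 25 * (κ ^ 2 * I1) + 900 * (τ ^ 2 * I2)
      + 300 * ((κ * s1) * (τ * s2)) := by
    rw [← q1, ← q2]; ring
  rw [k5]
  linarith
/-- inequality (3.7) of the paper, Corollary 3.4. -/
theorem stmt_15 :
    ∃ C : ℝ, 0 < C ∧
      ∀ (u v : Pt → ℝ), ContDiff ℝ (⊤ : ℕ∞) u → HasCompactSupport u →
        ContDiff ℝ (⊤ : ℕ∞) v → HasCompactSupport v →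
        ∀ t : ℝ, 0 ≤ t →
          ∫ x : Sp, d2abs u (Fin.cons t x) * |v (Fin.cons t x)| / jb (rad x) ^ 2
            ≤ C * (jb t)⁻¹ * Qfac 1 u t *
                (∫ x : Sp, (v (Fin.cons t x)) ^ 2 / jb (rad x) ^ 4) ^ ((1:ℝ)/2)
              + C * (jb t) ^ (-(4:ℝ)/3) * Qfac 1 u t *
                  (∫ x : Sp, ∑ a, (pd a v (Fin.cons t x)) ^ 2) ^ ((1:ℝ)/2) := by
  refine ⟨18000, by norm_num, fun u v hu hu' hv hv' t ht => ?_⟩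
  have gu : Good u := ⟨hu, hu'⟩
  have gv : Good v := ⟨hv, hv'⟩
  have hW : ∀ X, 0 < Wt t X := fun X => by unfold Wt; positivity
  have hQ := Qfac_nonneg u t
  obtain ⟨hi, hs⟩ := sqd_integral gu t
  have hso := second_order gu ht hi
  have hvb := v_bound gv ht
  have hT : 0 < jb t := Real.sqrt_pos.2 (by positivity)
  set I1 := (∫ x : Sp, (v (Fin.cons t x)) ^ 2 / jb (rad x) ^ 4) ^ ((1:ℝ)/2)
  set I2 := (∫ x : Sp, ∑ a, (pd a v (Fin.cons t x)) ^ 2) ^ ((1:ℝ)/2)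
  have p1 : 0 ≤ I1 := Real.rpow_nonneg (integral_nonneg fun x => by
    dsimp only [Pi.zero_apply]; positivity) _
  have p2 : 0 ≤ I2 := Real.rpow_nonneg (integral_nonneg fun x => by
    dsimp only [Pi.zero_apply]; positivity) _
  have hτ0 : 0 ≤ (jb t) ^ (-(4:ℝ)/3) := Real.rpow_nonneg hT.le _
  have hd := d2abs_slice gu t
  have hvs := gv.slice t
  have cW : Continuous (fun x : Sp => Real.sqrt (Wt t (Fin.cons t x))) :=
    ((contDiff_Wt t).continuous.comp (continuous_slice t)).sqrt
  have cR : Continuous (fun x : Sp => rho (Fin.cons t x)) :=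
    contDiff_rho.continuous.comp (continuous_slice t)
  have hsW : ∀ x : Sp, 0 < Real.sqrt (Wt t (Fin.cons t x)) := fun x => Real.sqrt_pos.2 (hW _)
  have hrp : ∀ x : Sp, 0 < rho (Fin.cons t x) := fun x => rho_pos _
  have key := cauchy_schwarz
    (f := fun x : Sp => Real.sqrt (Wt t (Fin.cons t x)) * d2abs u (Fin.cons t x))
    (g := fun x : Sp => (rho (Fin.cons t x) ^ 2 * Real.sqrt (Wt t (Fin.cons t x)))⁻¹
      * |v (Fin.cons t x)|)
    (A := 600 * Qfac 1 u t)
    (B := 5 * (jb t)⁻¹ * I1 + 30 * (jb t) ^ (-(4:ℝ)/3) * I2)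
    (cW.mul hd.1) hd.2.mul_left
    (((cR.pow 2).mul cW).inv₀ (fun x => (mul_pos (pow_pos (hrp x) 2) (hsW x)).ne') |>.mul hvs.1.abs)
    ((hvs.2.comp_left (g := fun y : ℝ => |y|) abs_zero).mul_left)
    (fun x => by unfold d2abs; positivity) (fun x => by
      have := hsW x
      have := hrp x
      positivity) (by positivity) (by positivity)
    (by
      have h1 : ∫ x : Sp, (Real.sqrt (Wt t (Fin.cons t x)) * d2abs u (Fin.cons t x)) ^ 2 ≤
          ∫ x : Sp, 16 * (Wt t (Fin.cons t x) *
            (∑ a : Fin 4, ∑ b : Fin 4, (pd a (pd b u) (Fin.cons t x)) ^ 2)) := by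
        apply integral_mono_of_nonneg
        · refine Filter.Eventually.of_forall fun x => ?_
          dsimp only [Pi.zero_apply]; positivity
        · apply Integrable.const_mul
          simp_rw [Finset.mul_sum]
          refine integrable_finsetSum _ fun a _ => integrable_finsetSum _ fun b _ => ?_
          simp_rw [pow_two]
          exact (Good.mul2 (contDiff_Wt t) ((gu.pd b).pd a).1 ((gu.pd b).pd a)).integrable t
        · refine Filter.Eventually.of_forall fun x => ?_
          dsimp only
          rw [mul_pow, Real.sq_sqrt (hW _).le]
          have := mul_le_mul_of_nonneg_left (d2abs_sq u (Fin.cons t x)) (hW (Fin.cons t x)).le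
          linarith
      rw [integral_const_mul] at h1
      refine h1.trans ?_
      nlinarith [sq_nonneg (Qfac 1 u t)])
    (by
      refine le_trans (le_of_eq ?_) hvb
      congr 1
      ext x
      rw [mul_pow, inv_pow, mul_pow, Real.sq_sqrt (hW _).le, sq_abs]
      ring)
  have e : ∫ x : Sp, d2abs u (Fin.cons t x) * |v (Fin.cons t x)| / jb (rad x) ^ 2 =
      ∫ x : Sp, (Real.sqrt (Wt t (Fin.cons t x)) * d2abs u (Fin.cons t x)) *
        ((rho (Fin.cons t x) ^ 2 * Real.sqrt (Wt t (Fin.cons t x)))⁻¹ * |v (Fin.cons t x)|) := by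
    congr 1
    ext x
    rw [jb_rad t]
    have := (hsW x).ne'
    have := (hrp x).ne'
    field_simp
  rw [e]
  refine key.trans ?_
  have n1 : 0 ≤ (jb t)⁻¹ * Qfac 1 u t * I1 := by positivity
  have n2 : 0 ≤ (jb t) ^ (-(4:ℝ)/3) * Qfac 1 u t * I2 := by positivity
  linarith
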